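/- Define g : (1, +∞) → (0,1) by g(β) = max{ (β−2)/(β²−1), (β−1)²/(β³+β²−β) }, and let f(r) = (1 + γr)/(β + r). Let β and γ be real numbers with β > 1, γ < 0 and β + γ > 2 − g(β). Then there exist real numbers a ∈ (−1, 0) and b ∈ (0, +∞) satisfying all of the following: (i) a ≤ γ/β; (ii) b > (β + γ²)/(β² + γ); (iii) −a < b ≤ 1; (iv) a < f(b) and f(a) < b; (v) max{ |a + γb|, |b + γa| } < |a| · (β + a). -/

import Mathlib

/-- The function `g(β) = max{(β−2)/(β²−1), (β−1)²/(β³+β²−β)}`. -/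
noncomputable def gFun (β : ℝ) : ℝ :=
  max ((β - 2) / (β ^ 2 - 1)) ((β - 1) ^ 2 / (β ^ 3 + β ^ 2 - β))

/-! Write `γ = -c` and `a = -s`. As `f` is decreasing, `a ≤ γ / β` yields
`f a ≥ f (γ / β) = (β + γ²) / (β² + γ)`, so (ii) follows from `f a < b`. The remaining conditions
confine `b` to an interval, which is nonempty as soon as `s < 1`, `c + 1 < β - s`,
`c * f a < s * (β - s - 1)` and `f a < s * (β - s - c)`. These get easier as `c` decreases, so it is
enough to find one `s` satisfying their weak forms at the critical value `c = C := β - 2 + g β`.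

The sign of `β³ - 3β² + 1` decides which term of the maximum `g β` is the larger one and, at the
same time, whether `C ≥ 1` or `C ≤ 1`, hence which of the last two inequalities is the binding one.
If `C ≥ 1`, then `s = β(β - 2) / (β² - 1)` gives `C = β s` and makes the first of these two an
equality; if `C ≤ 1`, then `s = 1 / β` makes the second one an equality. -/

/-- The map `f(r) = (1 + γr)/(β + r)`; only its values at `r > -β` are meaningful. -/
noncomputable def fFun (β γ r : ℝ) : ℝ :=
  (1 + γ * r) / (β + r)

/-- `C` is a threshold for the choice `a = -s`: at `γ = -C`, the conditions on `a` and on the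
interval left for `b` hold in weak form, so that `a` works for every `γ ∈ (-C, 0)`. The last two
fields are the inequalities `C * f a ≤ s * (β - s - 1)` and `f a ≤ s * (β - s - C)` cleared of the
denominator `β - s`. -/
structure IsThreshold (β C s : ℝ) : Prop where
  pos : 0 < s
  lt_one : s < 1
  le_mul : C ≤ β * s
  add_one_le : C + 1 ≤ β - s
  mul_one_add_le : C * (1 + C * s) ≤ s * (β - s - 1) * (β - s)
  one_add_le : 1 + C * s ≤ s * (β - s - C) * (β - s)

section Map

variable {β γ a b c s : ℝ}

theorem fFun_antitoneOn (h : β * γ ≤ 1) : AntitoneOn (fFun β γ) (Set.Ioi (-β)) := by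
  intro x hx y hy hxy
  rw [Set.mem_Ioi] at hx hy
  unfold fFun
  rw [div_le_div_iff₀ (by linarith) (by linarith)]
  linear_combination mul_nonneg (sub_nonneg.2 h) (sub_nonneg.2 hxy)

theorem fFun_div (hβ : β ≠ 0) : fFun β γ (γ / β) = (β + γ ^ 2) / (β ^ 2 + γ) := by
  unfold fFun
  rw [← mul_div_mul_left _ _ hβ]
  congr 1 <;> field_simp

theorem le_fFun_of_le_div (hβ : 0 < β) (hγ : β * γ ≤ 1) (ha : -β < a) (h : a ≤ γ / β) :
    (β + γ ^ 2) / (β ^ 2 + γ) ≤ fFun β γ a :=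
  fFun_div (γ := γ) hβ.ne' ▸ fFun_antitoneOn hγ ha (ha.trans_le h) h

theorem neg_lt_fFun_neg (hs : 0 ≤ s) (hb : 0 ≤ b) (hβb : 0 < β + b)
    (h : s + c * b < s * (β - s)) : -s < fFun β (-c) b := by
  rw [fFun, lt_div_iff₀ hβb]
  linarith [mul_nonneg hs hs, mul_nonneg hs hb]

theorem max_abs_lt_abs_mul (hs : 0 ≤ s) (hb : 0 ≤ b) (hc : 0 ≤ c)
    (hleft : s + c * b < s * (β - s)) (hright : b + c * s < s * (β - s)) :
    max |-s + -c * b| |b + -c * -s| < |-s| * (β + -s) := by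
  have habs_left : |-s + -c * b| = s + c * b := by
    rw [neg_mul, ← neg_add, abs_neg, abs_of_nonneg (by positivity)]
  have habs_right : |b + -c * -s| = b + c * s := by
    rw [neg_mul_neg, abs_of_nonneg (by positivity)]
  rw [habs_left, habs_right, abs_neg, abs_of_nonneg hs, ← sub_eq_add_neg]
  exact max_lt hleft hright

end Map

theorem IsThreshold.exists_right_endpoint {β C c s : ℝ} (h : IsThreshold β C s) (hc : 0 < c)
    (hcC : c < C) :
    ∃ b, s < b ∧ b ≤ 1 ∧ fFun β (-c) (-s) < b ∧
      s + c * b < s * (β - s) ∧ b + c * s < s * (β - s) := by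
  have hs := h.pos
  have hs1 := h.lt_one
  have hgap : c + 1 < β - s := by linarith [h.add_one_le]
  have hp : 0 < β - s := by linarith
  have hfa : fFun β (-c) (-s) = (1 + c * s) / (β - s) := by
    rw [fFun, neg_mul_neg, ← sub_eq_add_neg]
  have hfa_one : fFun β (-c) (-s) < 1 := by
    rw [hfa, div_lt_one hp]
    linarith [mul_lt_mul_of_pos_left hs1 hc]
  have hfa_left : fFun β (-c) (-s) < s * (β - s - 1) / c := by
    rw [hfa, div_lt_div_iff₀ hp hc]
    calc (1 + c * s) * c < (1 + C * s) * C := by gcongr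
      _ = C * (1 + C * s) := mul_comm _ _
      _ ≤ _ := h.mul_one_add_le
  have hfa_right : fFun β (-c) (-s) < s * (β - s - c) := by
    rw [hfa, div_lt_iff₀ hp]
    calc 1 + c * s < 1 + C * s := by gcongr
      _ ≤ s * (β - s - C) * (β - s) := h.one_add_le
      _ ≤ s * (β - s - c) * (β - s) := by gcongr
  have hs_left : s < s * (β - s - 1) / c := by
    rw [lt_div_iff₀ hc]
    gcongr
    linarith
  have hs_right : s < s * (β - s - c) := lt_mul_of_one_lt_right hs (by linarith)
  obtain ⟨b, hlow, hup⟩ := exists_between <| max_lt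
    (lt_min hs1 (lt_min hs_left hs_right)) (lt_min hfa_one (lt_min hfa_left hfa_right))
  simp only [max_lt_iff, lt_min_iff, lt_div_iff₀ hc] at hlow hup
  obtain ⟨hsb, hfab⟩ := hlow
  obtain ⟨hb1, hleft, hright⟩ := hup
  exact ⟨b, hsb, hb1.le, hfab, by linarith, by linarith⟩

section Threshold

variable {β C s : ℝ}

theorem IsThreshold.of_le_one (hs : 0 < s) (hs1 : s < 1) (hsβ : s ≤ β) (hC : C ≤ 1)
    (hCs : C ≤ β * s) (hgap : C + 1 ≤ β - s) (heq : 1 + C * s = s * (β - s - C) * (β - s)) :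
    IsThreshold β C s where
  pos := hs
  lt_one := hs1
  le_mul := hCs
  add_one_le := hgap
  one_add_le := heq.le
  mul_one_add_le := by
    have hgain : 0 ≤ s * (1 - C) * (β - s - 1 - C) * (β - s) := by
      have : 0 ≤ 1 - C := by linarith
      have : 0 ≤ β - s - 1 - C := by linarith
      have : 0 ≤ β - s := by linarith
      positivity
    linear_combination hgain + C * heq

theorem IsThreshold.of_one_le (hs : 0 < s) (hs1 : s < 1) (hC : 1 ≤ C)
    (hCs : C ≤ β * s) (hgap : C + 1 ≤ β - s)
    (hle : C * (1 + C * s) ≤ s * (β - s - 1) * (β - s)) :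
    IsThreshold β C s where
  pos := hs
  lt_one := hs1
  le_mul := hCs
  add_one_le := hgap
  mul_one_add_le := hle
  one_add_le := by
    have hgain : 0 ≤ s * (C - 1) * (β - s - 1 - C) * (β - s) := by
      have : 0 ≤ C - 1 := by linarith
      have : 0 ≤ β - s - 1 - C := by linarith
      have : 0 ≤ β - s := by linarith
      positivity
    refine le_of_mul_le_mul_left ?_ (by linarith : 0 < C)
    linear_combination hgain + hle

end Threshold

section CriticalValue

variable {β : ℝ}

theorem sq_sub_one_pos (hβ : 1 < β) : 0 < β ^ 2 - 1 :=
  sub_pos.2 (one_lt_pow₀ hβ two_ne_zero)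

theorem cube_add_sq_sub_self_pos (hβ : 1 < β) : 0 < β ^ 3 + β ^ 2 - β := by
  have : 0 < β * (β ^ 2 - 1 + β) := mul_pos (by linarith) (by linarith [sq_sub_one_pos hβ])
  linear_combination this

theorem gFun_right_le_left_iff (hβ : 1 < β) :
    (β - 1) ^ 2 / (β ^ 3 + β ^ 2 - β) ≤ (β - 2) / (β ^ 2 - 1) ↔ 0 ≤ β ^ 3 - 3 * β ^ 2 + 1 := by
  rw [div_le_div_iff₀ (cube_add_sq_sub_self_pos hβ) (sq_sub_one_pos hβ)]
  constructor <;> intro h <;> linarith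

theorem isThreshold_of_cubic_nonneg (hβ : 1 < β) (hcubic : 0 ≤ β ^ 3 - 3 * β ^ 2 + 1) :
    IsThreshold β (β - 2 + (β - 2) / (β ^ 2 - 1)) (β * (β - 2) / (β ^ 2 - 1)) := by
  have hβ2 : 2 < β := by
    by_contra! hle
    linarith [sq_sub_one_pos hβ, mul_nonneg (sub_nonneg.2 hle) (sq_nonneg β)]
  have hden := sq_sub_one_pos hβ
  set s := β * (β - 2) / (β ^ 2 - 1) with hs
  have hs_mul : s * (β ^ 2 - 1) = β * (β - 2) := div_mul_cancel₀ _ hden.ne'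
  have hC : β - 2 + (β - 2) / (β ^ 2 - 1) = β * s := by
    rw [hs]
    field_simp
    ring
  rw [hC]
  apply IsThreshold.of_one_le
  · exact div_pos (mul_pos (by linarith) (by linarith)) hden
  · rw [hs, div_lt_one hden]
    linarith
  · rw [hs, ← mul_div_assoc, one_le_div hden]
    linarith
  · exact le_rfl
  · have : s * (β + 1) ≤ β - 1 := by
      refine le_of_mul_le_mul_right ?_ (sub_pos.2 hβ)
      linarith
    linarith
  · exact le_of_eq (by linear_combination s * (s + 1) * hs_mul)

theorem isThreshold_of_cubic_nonpos (hβ : 1 < β) (hcubic : β ^ 3 - 3 * β ^ 2 + 1 ≤ 0) :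
    IsThreshold β (β - 2 + (β - 1) ^ 2 / (β ^ 3 + β ^ 2 - β)) β⁻¹ := by
  have hβ0 : 0 < β := by linarith
  have hden := cube_add_sq_sub_self_pos hβ
  set C := β - 2 + (β - 1) ^ 2 / (β ^ 3 + β ^ 2 - β) with hC
  have hC_mul : C * (β ^ 3 + β ^ 2 - β) = β ^ 4 - β ^ 3 - 2 * β ^ 2 + 1 := by
    rw [hC, add_mul, div_mul_cancel₀ _ hden.ne']
    ring
  have hC1 : C ≤ 1 := by
    refine le_of_mul_le_mul_right ?_ hden
    have : (β + 1) * (β ^ 3 - 3 * β ^ 2 + 1) ≤ 0 :=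
      mul_nonpos_of_nonneg_of_nonpos (by linarith) hcubic
    linarith
  have hinv : β⁻¹ < 1 := inv_lt_one_of_one_lt₀ hβ
  apply IsThreshold.of_le_one (inv_pos.2 hβ0) hinv (hinv.trans hβ).le hC1
  · rwa [mul_inv_cancel₀ hβ0.ne']
  · have : (β - 1) ^ 2 / (β ^ 3 + β ^ 2 - β) ≤ (β - 1) / β := by
      rw [div_le_div_iff₀ hden hβ0]
      have : 0 ≤ (β - 1) * β ^ 3 := mul_nonneg (by linarith) (by positivity)
      linarith
    rw [sub_div, div_self hβ0.ne', one_div] at this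
    linarith
  · field_simp
    linear_combination hC_mul

theorem exists_isThreshold (hβ : 1 < β) : ∃ s, IsThreshold β (β - 2 + gFun β) s := by
  unfold gFun
  rcases le_or_gt ((β - 1) ^ 2 / (β ^ 3 + β ^ 2 - β)) ((β - 2) / (β ^ 2 - 1)) with hle | hlt
  · rw [max_eq_left hle]
    exact ⟨_, isThreshold_of_cubic_nonneg hβ ((gFun_right_le_left_iff hβ).1 hle)⟩
  · rw [max_eq_right hlt.le]
    have hcubic := (not_congr (gFun_right_le_left_iff hβ)).1 hlt.not_ge
    exact ⟨_, isThreshold_of_cubic_nonpos hβ (le_of_not_ge hcubic)⟩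

end CriticalValue

/-- For `β > 1`, `γ < 0` and `β + γ > 2 − g(β)`, there exist `a ∈ (−1,0)` and
`b ∈ (0,∞)` satisfying, with `f(r) = (1+γr)/(β+r)`:
(i) `a ≤ γ/β`; (ii) `b > (β+γ²)/(β²+γ)`; (iii) `−a < b ≤ 1`;
(iv) `a < f(b)` and `f(a) < b`; (v) `max{|a+γb|, |b+γa|} < |a|·(β+a)`. -/
theorem stmt17 (β γ : ℝ) (hβ : 1 < β) (hγ : γ < 0) (h : β + γ > 2 - gFun β) :
    ∃ a b : ℝ, -1 < a ∧ a < 0 ∧ 0 < b ∧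
      a ≤ γ / β ∧
      b > (β + γ ^ 2) / (β ^ 2 + γ) ∧
      -a < b ∧ b ≤ 1 ∧
      a < (1 + γ * b) / (β + b) ∧ (1 + γ * a) / (β + a) < b ∧
      max |a + γ * b| |b + γ * a| < |a| * (β + a) := by
  obtain ⟨s, hS⟩ := exists_isThreshold hβ
  obtain ⟨c, rfl⟩ : ∃ c, γ = -c := ⟨-γ, (neg_neg γ).symm⟩
  have hc : 0 < c := neg_lt_zero.1 hγ
  have hs := hS.pos
  have hs1 := hS.lt_one
  have hcs : c ≤ β * s := by linarith [hS.le_mul]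
  obtain ⟨b, hsb, hb1, hfab, hleft, hright⟩ := hS.exists_right_endpoint hc (by linarith)
  have hb : 0 < b := hs.trans hsb
  have ha : -s ≤ -c / β := by
    rw [le_div_iff₀ (by linarith)]
    linarith
  have hii : (β + (-c) ^ 2) / (β ^ 2 + -c) ≤ fFun β (-c) (-s) :=
    le_fFun_of_le_div (by linarith) (by linarith [mul_pos (zero_lt_one.trans hβ) hc])
      (by linarith) ha
  refine ⟨-s, b, by linarith, by linarith, hb, ha, hii.trans_lt hfab, by linarith, hb1,
    neg_lt_fFun_neg hs.le hb.le (by linarith) hleft, hfab,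
    max_abs_lt_abs_mul hs.le hb.le hc.le hleft hright⟩
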